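/- Let n ≥ 3 and let 𝒜 = {[A₁],…,[A_r]} be a malnormal subgroup system of F_n, with L, Γ_i, 𝒞 and S_k as in the context. Let k ≥ 3, let S_k⁰ ⊆ S_k be a set containing exactly one of w, w⁻¹ for every w ∈ S_k, and define M : S_{k−1} × S_k⁰ → {0,1} by M(v,w) = 1 if there exists b ∈ 𝔄 with |vb| = |v|+1 and (w = vb or w⁻¹ = vb), and M(v,w) = 0 otherwise. Then for every u ∈ S_{k−2} and every w ∈ S_k⁰: Σ_{b ∈ 𝔄, |bu| = |u|+1, bu ∈ S_{k−1}} M(bu, w) = Σ_{b ∈ 𝔄, |bu⁻¹| = |u|+1, bu⁻¹ ∈ S_{k−1}} M(bu⁻¹, w). -/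

import Mathlib

/-!
For `|w| = |v| + 2`, the entry `M(bv, w)` is nonzero exactly when `w` or `w⁻¹` has the form `b v c`,
that is, when `b` is its first letter and `v` is its middle, the word left after deleting both end
letters. The requirement `bv ∈ S_{k-1}` is then automatic, because `bv` is a prefix of `w` or `w⁻¹`
and `S_k` is closed under inversion; the latter holds because `𝒞` is so: the path of `x⁻¹` is
carried by `x` to the path of `x`, and `T_B` to `T_{xBx⁻¹}`.

The word `w` has exactly one first letter, and `w`, `w⁻¹` do not both have middle `v ≠ 1`, since
their middles are mutually inverse and `F_n` is torsion-free. Hence `Σ_b M(bv, w)` is the sum of the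
indicators of `v = m` and `v = m⁻¹`, where `m` is the middle of `w`, and this is invariant under
`v ↦ v⁻¹`.
-/

open scoped Classical
open MeasureTheory

noncomputable section

namespace RelCurr

/-- The alphabet `𝔄 = ℬ ∪ ℬ⁻¹`: a letter is a generator together with a sign. -/
abbrev Letter (n : ℕ) := Fin n × Bool

/-- The inverse of a letter. -/
def linv {n : ℕ} (x : Letter n) : Letter n := (x.1, !x.2)

/-- The free group of rank `n` on the basis `Fin n`. -/
abbrev F (n : ℕ) := FreeGroup (Fin n)

/-- The reduced word of an element of `F n`. -/
def rword {n : ℕ} (g : F n) : List (Letter n) := FreeGroup.toWord g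

/-- The length `|g|` of the reduced word of `g`. -/
def wlen {n : ℕ} (g : F n) : ℕ := (rword g).length

/-- The single-letter element of `F n` given by a letter. -/
def letterE {n : ℕ} (b : Letter n) : F n := FreeGroup.mk [b]

/-- The conjugate subgroup `g A g⁻¹`. -/
def conjSub {n : ℕ} (g : F n) (A : Subgroup (F n)) : Subgroup (F n) :=
  Subgroup.map (MulAut.conj g).toMonoidHom A

/-- A subgroup `A` is malnormal if `xAx⁻¹ ∩ A = {1}` for every `x ∉ A`. -/
def Malnormal {n : ℕ} (A : Subgroup (F n)) : Prop :=
  ∀ x : F n, x ∉ A → conjSub x A ⊓ A = ⊥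

/-- The word metric on the Cayley tree `T`. -/
def dist' {n : ℕ} (x y : F n) : ℕ := wlen (x⁻¹ * y)

/-- The cyclically reduced length of `a`. -/
def cycLen {n : ℕ} (a : F n) : ℕ := sInf { m | ∃ h : F n, wlen (h⁻¹ * a * h) = m }

/-- The vertex set of the minimal `A`-invariant subtree `T_A` of the Cayley tree:
the union of the axes of the nontrivial elements of `A`. -/
def treeVerts {n : ℕ} (A : Subgroup (F n)) : Set (F n) :=
  { h | ∃ a ∈ A, a ≠ 1 ∧ wlen (h⁻¹ * a * h) = cycLen a }

/-- `γ_w ⊆ S`: every prefix of the reduced word of `w` lies in the vertex set `S`. -/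
def pathIn {n : ℕ} (w : F n) (S : Set (F n)) : Prop :=
  ∀ m ≤ wlen w, FreeGroup.mk ((rword w).take m) ∈ S

/-- An element is cyclically reduced if the last letter of its reduced word is not the
inverse of the first letter. -/
def CyclicallyReduced {n : ℕ} (w : F n) : Prop :=
  ∀ x y : Letter n, (rword w).head? = some x → (rword w).getLast? = some y → y ≠ linv x

/-- `v` is a length-one extension of `w`. -/
def LengthOneExt {n : ℕ} (w v : F n) : Prop :=
  ∃ b : Letter n, v = w * letterE b ∧ wlen v = wlen w + 1

/-- `a` is an extension of `w`: the reduced word of `w` is a proper prefix of that of `a`. -/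
def ExtensionOf {n : ℕ} (w a : F n) : Prop :=
  rword w <+: rword a ∧ wlen w < wlen a

/-- `g` is a proper power. -/
def IsProperPower {n : ℕ} (g : F n) : Prop := ∃ (h : F n) (k : ℕ), 2 ≤ k ∧ g = h ^ k

section System

variable {n r : ℕ} (A : Fin r → Subgroup (F n))

/-- `[B] ∈ 𝒜`, i.e. `B` is a conjugate of one of the subgroups of the system. -/
def InSystem (B : Subgroup (F n)) : Prop := ∃ (i : Fin r) (g : F n), B = conjSub g (A i)

/-- The family `A` represents a subgroup system: finite rank subgroups distinct
from `{1}` and `F n`. -/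
def IsSystem : Prop := (∀ i, (A i).FG) ∧ (∀ i, A i ≠ ⊥) ∧ (∀ i, A i ≠ ⊤)

/-- The subgroup system is malnormal. -/
def SystemMalnormal : Prop :=
  (∀ i, Malnormal (A i)) ∧
  ∀ B₁ B₂ : Subgroup (F n), InSystem A B₁ → InSystem A B₂ → B₁ ≠ B₂ → B₁ ⊓ B₂ = ⊥

/-- `g` is `𝒜`-peripheral: trivial or contained in a conjugate of one of the `A i`. -/
def Peripheral (g : F n) : Prop := g = 1 ∨ ∃ B, InSystem A B ∧ g ∈ B

/-- The diameter of the intersection of the trees of two distinct subgroups of the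
system is at most `L`. -/
def DiamBound (L : ℕ) : Prop :=
  ∀ B₁ B₂ : Subgroup (F n), InSystem A B₁ → InSystem A B₂ → B₁ ≠ B₂ →
    ∀ x ∈ treeVerts B₁ ∩ treeVerts B₂, ∀ y ∈ treeVerts B₁ ∩ treeVerts B₂, dist' x y ≤ L

/-- `B ∈ Γ_i`: `B` is a conjugate of `A i` whose tree contains the base point `1`. -/
def GammaMem (i : Fin r) (B : Subgroup (F n)) : Prop :=
  (∃ g : F n, B = conjSub g (A i)) ∧ (1 : F n) ∈ treeVerts B

/-- The finite set `𝒞` of words of length `L+2` whose path is contained in no tree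
`T_B` with `B ∈ Γ_i`, for every `i`. -/
def Ccal (L : ℕ) : Set (F n) :=
  { w | wlen w = L + 2 ∧ ∀ (i : Fin r) (B : Subgroup (F n)), GammaMem A i B →
      ¬ pathIn w (treeVerts B) }

/-- `F_n − 𝒜`: the words containing an element of `𝒞` as a contiguous subword. -/
def FmA (L : ℕ) : Set (F n) := { w | ∃ x ∈ Ccal A L, rword x <:+: rword w }

/-- `S_k`: words of length `k` not containing any element of `𝒞` as a subword. -/
def Sk (L k : ℕ) : Set (F n) := { w | wlen w = k ∧ w ∉ FmA A L }

end System

/-! ### The boundary of `F n` -/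

/-- An infinite reduced word. -/
def IsRed {n : ℕ} (ξ : ℕ → Letter n) : Prop := ∀ i, ξ (i + 1) ≠ linv (ξ i)

/-- The Gromov boundary `∂F_n`, realized as the space of infinite reduced words,
topologized as a subspace of the product space. -/
def Boundary (n : ℕ) : Type := { ξ : ℕ → Letter n // IsRed ξ }

instance {n : ℕ} : TopologicalSpace (Boundary n) :=
  instTopologicalSpaceSubtype

/-- The length-`m` prefix of a boundary point. -/
def bpre {n : ℕ} (ξ : Boundary n) (m : ℕ) : List (Letter n) :=
  (List.range m).map ξ.1

/-- The reduced word of `w` is a prefix of the infinite word `ξ`. -/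
def wordPrefixOf {n : ℕ} (w : F n) (ξ : Boundary n) : Prop :=
  bpre ξ (wlen w) = rword w

/-- The boundary (limit set) `∂A ⊆ ∂F_n` of a subgroup `A`. -/
def limitSet {n : ℕ} (A : Subgroup (F n)) : Set (Boundary n) :=
  { ξ | ∀ m : ℕ, ∃ a ∈ A, bpre ξ m <+: rword a }

/-- `ξ = g^{+∞}`: `ξ` is the limit of the reduced words of the powers of `g`. -/
def IsPosLimit {n : ℕ} (g : F n) (ξ : Boundary n) : Prop :=
  ∀ m : ℕ, ∃ N : ℕ, ∀ k ≥ N, bpre ξ m <+: rword (g ^ k)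

/-- The number of letters cancelled when concatenating the word `l` with the
infinite reduced word `ξ`. -/
def cancelLen {n : ℕ} (l : List (Letter n)) (ξ : ℕ → Letter n) : ℕ :=
  sSup { j | j ≤ l.length ∧ ∀ i < j, l.reverse[i]? = some (linv (ξ i)) }

/-- The sequence underlying the action of `g` on a boundary point: left multiplication
followed by cancellation. -/
def actSeq {n : ℕ} (g : F n) (ξ : ℕ → Letter n) : ℕ → Letter n :=
  fun m =>
    if h : m < (rword g).length - cancelLen (rword g) ξ then
      (rword g).get ⟨m, by omega⟩
    else ξ (m - ((rword g).length - cancelLen (rword g) ξ) + cancelLen (rword g) ξ)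

/-- The action of `F n` on its boundary: left multiplication followed by cancellation.
(The sequence `actSeq g ξ.1` is always reduced, so the first branch always applies.) -/
def bAct {n : ℕ} (g : F n) (ξ : Boundary n) : Boundary n :=
  if h : IsRed (actSeq g ξ.1) then ⟨actSeq g ξ.1, h⟩ else ξ

/-! ### The double boundary -/

/-- The diagonal action of `F n` on `Sym2 (∂F_n)`, whose restriction to the set of
non-diagonal classes is the action on the double boundary `∂²F_n`. -/
def dbAct {n : ℕ} (g : F n) : Sym2 (Boundary n) → Sym2 (Boundary n) := Sym2.map (bAct g)

/-- `∂²𝒜`: the classes `{ξ,η}` with both endpoints in `g·∂A_i = ∂(gA_ig⁻¹)` for some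
`i` and `g`. -/
def dblBndA {n r : ℕ} (A : Fin r → Subgroup (F n)) : Set (Sym2 (Boundary n)) :=
  { z | ∃ (i : Fin r) (g : F n) (ξ η : Boundary n), z = s(ξ, η) ∧
      ξ ∈ limitSet (conjSub g (A i)) ∧ η ∈ limitSet (conjSub g (A i)) }

/-- The double boundary `∂²(F_n,𝒜)` of `F n` relative to `𝒜`, as a subset of
`Sym2 (∂F_n)`: non-diagonal classes not lying in `∂²𝒜`. -/
def relSet {n r : ℕ} (A : Fin r → Subgroup (F n)) : Set (Sym2 (Boundary n)) :=
  { z | ¬ z.IsDiag } \ dblBndA A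

/-- The cylinder set `C(γ_w) ⊆ ∂²F_n` of the geodesic path from `1` to `w`. -/
def cylinder {n : ℕ} (w : F n) : Set (Sym2 (Boundary n)) :=
  { z | ∃ ξ η : Boundary n, z = s(ξ, η) ∧ ξ.1 0 ≠ η.1 0 ∧
      (wordPrefixOf w ξ ∨ wordPrefixOf w η) }

instance {n : ℕ} : MeasurableSpace (Sym2 (Boundary n)) := borel _

/-- The action of `g ∈ F n` on `∂²(F_n,𝒜)`. (The action of `F n` preserves
`∂²(F_n,𝒜)`, so the first branch always applies.) -/
def relAct {n r : ℕ} (A : Fin r → Subgroup (F n)) (g : F n) (z : ↥(relSet A)) :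
    ↥(relSet A) :=
  if h : dbAct g z.1 ∈ relSet A then ⟨dbAct g z.1, h⟩ else z

/-- The cylinder `C(γ_w)` as a subset of `∂²(F_n,𝒜)`. -/
def relCyl {n r : ℕ} (A : Fin r → Subgroup (F n)) (w : F n) : Set ↥(relSet A) :=
  Subtype.val ⁻¹' cylinder w

/-- The translated cylinder `g·C(γ_w)` as a subset of `∂²(F_n,𝒜)`. -/
def relCylG {n r : ℕ} (A : Fin r → Subgroup (F n)) (g w : F n) : Set ↥(relSet A) :=
  Subtype.val ⁻¹' (dbAct g '' cylinder w)

/-- A relative current on `(F_n,𝒜)`: an `F_n`-invariant Radon measure on the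
locally compact space `∂²(F_n,𝒜)` (finite on compacts, outer regular, inner regular
on open sets). -/
def IsRelCurrent {n r : ℕ} (A : Fin r → Subgroup (F n)) (μ : Measure ↥(relSet A)) : Prop :=
  (∀ (g : F n) (s : Set ↥(relSet A)), MeasurableSet s → μ (relAct A g ⁻¹' s) = μ s) ∧
  μ.Regular

/-- The `F_n`-orbit of a point of `Sym2 (∂F_n)`, inside `∂²(F_n,𝒜)`. -/
def orbitOf {n r : ℕ} (A : Fin r → Subgroup (F n)) (z : Sym2 (Boundary n)) :
    Set ↥(relSet A) :=
  { y | ∃ h : F n, (y : Sym2 (Boundary n)) = dbAct h z }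


section Words

lemma invRev_isInfix {α : Type*} {l l' : List (α × Bool)} (h : l <:+: l') :
    FreeGroup.invRev l <:+: FreeGroup.invRev l' :=
  List.reverse_infix.mpr (h.map _)

variable {α : Type*} [DecidableEq α] {x y v w : FreeGroup α} {b : α × Bool}

lemma toWord_mul_of_norm_mul (h : (x * y).norm = x.norm + y.norm) :
    (x * y).toWord = x.toWord ++ y.toWord :=
  (FreeGroup.toWord_mul_sublist x y).eq_of_length (by simpa [FreeGroup.norm] using h)

lemma toWord_mk_singleton (b : α × Bool) : (FreeGroup.mk [b]).toWord = [b] := by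
  rw [FreeGroup.toWord_mk, FreeGroup.reduce_singleton]

lemma norm_mk_singleton (b : α × Bool) : (FreeGroup.mk [b]).norm = 1 := by
  simp only [FreeGroup.norm, toWord_mk_singleton, List.length_singleton]

lemma toWord_mk_mul_mul_mk {c : α × Bool}
    (h : (FreeGroup.mk [b] * v * FreeGroup.mk [c]).norm = v.norm + 2) :
    (FreeGroup.mk [b] * v * FreeGroup.mk [c]).toWord = b :: (v.toWord ++ [c]) := by
  have hbvc := FreeGroup.norm_mul_le (FreeGroup.mk [b] * v) (FreeGroup.mk [c])
  have hbv := FreeGroup.norm_mul_le (FreeGroup.mk [b]) v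
  rw [norm_mk_singleton] at hbvc hbv
  rw [toWord_mul_of_norm_mul (by rw [norm_mk_singleton]; omega),
    toWord_mul_of_norm_mul (by rw [norm_mk_singleton]; omega),
    toWord_mk_singleton, toWord_mk_singleton, List.singleton_append, List.cons_append]

lemma mk_take_toWord (w : FreeGroup α) {m : ℕ} (hm : m ≤ w.norm) :
    FreeGroup.mk (w.toWord.take m) = w * FreeGroup.mk (w⁻¹.toWord.take (w.norm - m)) := by
  have htake : w⁻¹.toWord.take (w.norm - m) = FreeGroup.invRev (w.toWord.drop m) := by
    rw [FreeGroup.toWord_inv, FreeGroup.invRev, List.take_reverse, List.length_map,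
      ← FreeGroup.norm, Nat.sub_sub_self hm, ← List.map_drop, FreeGroup.invRev]
  rw [htake, ← FreeGroup.inv_mk, eq_mul_inv_iff_mul_eq, FreeGroup.mul_mk, List.take_append_drop,
    FreeGroup.mk_toWord]

/-- The middle of `w`: the element represented by the reduced word of `w` without its first and
last letters. -/
def middle (w : FreeGroup α) : FreeGroup α := FreeGroup.mk w.toWord.tail.dropLast

lemma middle_inv (w : FreeGroup α) : middle w⁻¹ = (middle w)⁻¹ := by
  simp only [middle, FreeGroup.toWord_inv, FreeGroup.inv_mk, FreeGroup.invRev, List.tail_reverse,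
    List.dropLast_reverse, List.map_tail, List.map_dropLast, List.tail_dropLast]

lemma exists_eq_mk_mul_mul_mk_iff (hw : w.norm = v.norm + 2) :
    (∃ c, w = FreeGroup.mk [b] * v * FreeGroup.mk [c]) ↔
      w.toWord.head? = some b ∧ middle w = v := by
  constructor
  · rintro ⟨c, rfl⟩
    simp only [middle, toWord_mk_mul_mul_mk hw, List.head?_cons, List.tail_cons,
      List.dropLast_concat, FreeGroup.mk_toWord, and_self]
  · rintro ⟨hb, rfl⟩
    obtain ⟨l, hl⟩ := List.head?_eq_some_iff.mp hb
    have hl_ne : l ≠ [] := by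
      rintro rfl
      simp [FreeGroup.norm, hl] at hw
    refine ⟨l.getLast hl_ne, ?_⟩
    rw [middle, hl, List.tail_cons, FreeGroup.mul_mk, FreeGroup.mul_mk, List.append_assoc,
      List.dropLast_append_getLast, List.singleton_append, ← hl, FreeGroup.mk_toWord]

lemma sum_ite_head?_toWord [Fintype α] (hw : w ≠ 1) (p : Prop) [Decidable p] :
    (∑ b : α × Bool, if w.toWord.head? = some b ∧ p then 1 else 0) = if p then 1 else 0 := by
  obtain ⟨b, l, hl⟩ := List.exists_cons_of_ne_nil (mt FreeGroup.toWord_eq_nil_iff.mp hw)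
  simp only [hl, List.head?_cons, Option.some_inj, ite_and, Finset.sum_ite_eq, Finset.mem_univ,
    if_true]

end Words

section AvoidingWords

variable {α : Type*} [DecidableEq α] {C : Set (FreeGroup α)} {k : ℕ} {v w : FreeGroup α}

/-- The elements of length `k` whose reduced word contains no element of `C` as a contiguous
subword; the paper's `S_k` is the case `C = 𝒞`. -/
def wordsAvoiding (C : Set (FreeGroup α)) (k : ℕ) : Set (FreeGroup α) :=
  { w | w.norm = k ∧ ¬ ∃ x ∈ C, x.toWord <:+: w.toWord }

lemma inv_mem_wordsAvoiding (hC : ∀ x ∈ C, x⁻¹ ∈ C) (hw : w ∈ wordsAvoiding C k) :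
    w⁻¹ ∈ wordsAvoiding C k := by
  refine ⟨FreeGroup.norm_inv_eq.trans hw.1, ?_⟩
  rintro ⟨x, hx, hxw⟩
  refine hw.2 ⟨x⁻¹, hC x hx, ?_⟩
  rw [FreeGroup.toWord_inv, ← inv_inv w, FreeGroup.toWord_inv w⁻¹]
  exact invRev_isInfix hxw

lemma left_mem_wordsAvoiding {x y : FreeGroup α} {l : ℕ} (hxy : x * y ∈ wordsAvoiding C (k + l))
    (hx : x.norm ≤ k) (hy : y.norm ≤ l) : x ∈ wordsAvoiding C k := by
  have hnorm := hxy.1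
  have hle := FreeGroup.norm_mul_le x y
  refine ⟨by omega, fun ⟨z, hz, hzx⟩ => hxy.2 ⟨z, hz, hzx.trans ?_⟩⟩
  rw [toWord_mul_of_norm_mul (by omega)]
  exact (List.prefix_append _ _).isInfix

/-- The matrix `M` of the paper: `M(v, w) = 1` if `w` or `w⁻¹` extends `v` by one letter on the
right, and `0` otherwise. -/
def extensionMatrix (v w : FreeGroup α) : ℕ :=
  if ∃ b : α × Bool, (v * FreeGroup.mk [b]).norm = v.norm + 1 ∧
    (w = v * FreeGroup.mk [b] ∨ w⁻¹ = v * FreeGroup.mk [b]) then 1 else 0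

lemma eq_extensionMatrix {M : FreeGroup α → FreeGroup α → ℕ}
    (hM1 : ∀ v w, (∃ b : α × Bool, (v * FreeGroup.mk [b]).norm = v.norm + 1 ∧
      (w = v * FreeGroup.mk [b] ∨ w⁻¹ = v * FreeGroup.mk [b])) → M v w = 1)
    (hM0 : ∀ v w, ¬ (∃ b : α × Bool, (v * FreeGroup.mk [b]).norm = v.norm + 1 ∧
      (w = v * FreeGroup.mk [b] ∨ w⁻¹ = v * FreeGroup.mk [b])) → M v w = 0) :
    M = extensionMatrix := by
  funext v w
  rw [extensionMatrix]
  split_ifs with h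
  exacts [hM1 v w h, hM0 v w h]

lemma ite_extensionMatrix (hC : ∀ x ∈ C, x⁻¹ ∈ C) (hw : w ∈ wordsAvoiding C (v.norm + 2))
    (b : α × Bool) :
    (if (FreeGroup.mk [b] * v).norm = v.norm + 1 ∧
        FreeGroup.mk [b] * v ∈ wordsAvoiding C (v.norm + 1) then
      extensionMatrix (FreeGroup.mk [b] * v) w else 0) =
    if (∃ c, w = FreeGroup.mk [b] * v * FreeGroup.mk [c]) ∨
      ∃ c, w⁻¹ = FreeGroup.mk [b] * v * FreeGroup.mk [c] then 1 else 0 := by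
  have hbv_le : (FreeGroup.mk [b] * v).norm ≤ v.norm + 1 := by
    have := FreeGroup.norm_mul_le (FreeGroup.mk [b]) v
    rwa [norm_mk_singleton, add_comm] at this
  have contributes {c} (h : FreeGroup.mk [b] * v * FreeGroup.mk [c] ∈
      wordsAvoiding C (v.norm + 2)) :
      ((FreeGroup.mk [b] * v).norm = v.norm + 1 ∧
        FreeGroup.mk [b] * v ∈ wordsAvoiding C (v.norm + 1)) ∧
      (FreeGroup.mk [b] * v * FreeGroup.mk [c]).norm = (FreeGroup.mk [b] * v).norm + 1 := by
    have hbv := left_mem_wordsAvoiding (l := 1) h hbv_le (norm_mk_singleton c).le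
    exact ⟨⟨hbv.1, hbv⟩, by rw [h.1, hbv.1]⟩
  rw [extensionMatrix, ← ite_and]
  refine if_congr ⟨?_, ?_⟩ rfl rfl
  · rintro ⟨-, c, -, h⟩
    exact h.imp (⟨c, ·⟩) (⟨c, ·⟩)
  · rintro (⟨c, h⟩ | ⟨c, h⟩)
    · obtain ⟨hbv, hnorm⟩ := contributes (h ▸ hw)
      exact ⟨hbv, c, hnorm, Or.inl h⟩
    · obtain ⟨hbv, hnorm⟩ := contributes (h ▸ inv_mem_wordsAvoiding hC hw)
      exact ⟨hbv, c, hnorm, Or.inr h⟩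

lemma sum_extensionMatrix [Fintype α] (hC : ∀ x ∈ C, x⁻¹ ∈ C) (hv : v ≠ 1)
    (hw : w ∈ wordsAvoiding C (v.norm + 2)) :
    (∑ b : α × Bool, if (FreeGroup.mk [b] * v).norm = v.norm + 1 ∧
        FreeGroup.mk [b] * v ∈ wordsAvoiding C (v.norm + 1) then
      extensionMatrix (FreeGroup.mk [b] * v) w else 0) =
    (if middle w = v then 1 else 0) + if middle w = v⁻¹ then 1 else 0 := by
  have hw1 : w ≠ 1 := by
    rintro rfl
    simpa using hw.1
  have hw_inv : w⁻¹.norm = v.norm + 2 := FreeGroup.norm_inv_eq.trans hw.1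
  have middle_excl : middle w = v → middle w⁻¹ ≠ v := by
    rintro rfl h
    exact hv (inv_eq_self.mp ((middle_inv w).symm.trans h))
  have term_eq (b : α × Bool) :
      (if (FreeGroup.mk [b] * v).norm = v.norm + 1 ∧
          FreeGroup.mk [b] * v ∈ wordsAvoiding C (v.norm + 1) then
        extensionMatrix (FreeGroup.mk [b] * v) w else 0) =
      (if w.toWord.head? = some b ∧ middle w = v then 1 else 0) +
        if w⁻¹.toWord.head? = some b ∧ middle w⁻¹ = v then 1 else 0 := by
    rw [ite_extensionMatrix hC hw, exists_eq_mk_mul_mul_mk_iff hw.1,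
      exists_eq_mk_mul_mul_mk_iff hw_inv]
    split_ifs <;> tauto
  rw [Finset.sum_congr rfl fun b _ => term_eq b, Finset.sum_add_distrib,
    sum_ite_head?_toWord hw1, sum_ite_head?_toWord (inv_ne_one.mpr hw1), middle_inv]
  simp only [inv_eq_iff_eq_inv]

end AvoidingWords

section ForbiddenWords

variable {n r L : ℕ}

lemma cycLen_conj (g a : F n) : cycLen (g * a * g⁻¹) = cycLen a := by
  unfold cycLen
  congr 1
  ext m
  refine (Equiv.mulLeft g⁻¹).exists_congr fun h => ?_
  simp only [Equiv.coe_mulLeft, mul_inv_rev, inv_inv, mul_assoc]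

lemma mul_mem_treeVerts_conjSub (g : F n) {B : Subgroup (F n)} {h : F n}
    (hh : h ∈ treeVerts B) : g * h ∈ treeVerts (conjSub g B) := by
  obtain ⟨a, ha, ha1, hlen⟩ := hh
  refine ⟨g * a * g⁻¹, ⟨a, ha, rfl⟩, mt conj_eq_one_iff.mp ha1, ?_⟩
  rw [cycLen_conj, ← hlen]
  congr 1
  group

lemma conjSub_conjSub (g h : F n) (B : Subgroup (F n)) :
    conjSub g (conjSub h B) = conjSub (g * h) B := by
  rw [conjSub, conjSub, conjSub, Subgroup.map_map, map_mul]
  rfl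

lemma pathIn_conjSub_of_pathIn_inv {w : F n} {B : Subgroup (F n)}
    (h : pathIn w⁻¹ (treeVerts B)) : pathIn w (treeVerts (conjSub w B)) := by
  intro m hm
  have htranslate : FreeGroup.mk ((rword w).take m) =
      w * FreeGroup.mk ((rword w⁻¹).take (wlen w - m)) := mk_take_toWord w hm
  rw [htranslate]
  exact mul_mem_treeVerts_conjSub w
    (h _ ((Nat.sub_le _ _).trans_eq FreeGroup.norm_inv_eq.symm))

lemma inv_mem_Ccal (A : Fin r → Subgroup (F n)) {w : F n} (hw : w ∈ Ccal A L) :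
    w⁻¹ ∈ Ccal A L := by
  refine ⟨FreeGroup.norm_inv_eq.trans hw.1, ?_⟩
  rintro i B ⟨⟨g, rfl⟩, -⟩ hpath
  have hpath' : pathIn w (treeVerts (conjSub w (conjSub g (A i)))) :=
    pathIn_conjSub_of_pathIn_inv hpath
  have hbase : (1 : F n) ∈ treeVerts (conjSub w (conjSub g (A i))) := hpath' 0 (Nat.zero_le _)
  exact hw.2 i _ ⟨⟨w * g, conjSub_conjSub w g (A i)⟩, hbase⟩ hpath'

end ForbiddenWords

theorem statement_14_general {α : Type*} [Fintype α] [DecidableEq α] {C : Set (FreeGroup α)}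
    (hC : ∀ x ∈ C, x⁻¹ ∈ C) {k : ℕ} {u w : FreeGroup α} (hu : u.norm = k + 1)
    (hw : w ∈ wordsAvoiding C (k + 3)) :
    (∑ b : α × Bool,
      if (FreeGroup.mk [b] * u).norm = u.norm + 1 ∧
          FreeGroup.mk [b] * u ∈ wordsAvoiding C (k + 2) then
        extensionMatrix (FreeGroup.mk [b] * u) w else 0) =
    ∑ b : α × Bool,
      if (FreeGroup.mk [b] * u⁻¹).norm = u.norm + 1 ∧
          FreeGroup.mk [b] * u⁻¹ ∈ wordsAvoiding C (k + 2) then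
        extensionMatrix (FreeGroup.mk [b] * u⁻¹) w else 0 := by
  have hu1 : u ≠ 1 := mt FreeGroup.norm_eq_zero.mpr (by omega)
  have hu_inv : u⁻¹.norm = k + 1 := FreeGroup.norm_inv_eq.trans hu
  have hsum := sum_extensionMatrix hC hu1 (by rwa [hu])
  have hsum_inv := sum_extensionMatrix hC (inv_ne_one.mpr hu1) (by rwa [hu_inv])
  rw [hu] at hsum ⊢
  rw [hu_inv, inv_inv] at hsum_inv
  exact (hsum.trans (add_comm _ _)).trans hsum_inv.symm

/-- The relation among the rows of the matrix M of the system of equations E¹_{k−1}. -/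
theorem statement_14 (n r L : ℕ) (hn : 3 ≤ n) (A : Fin r → Subgroup (F n))
    (hsys : IsSystem A) (hmal : SystemMalnormal A) (hL : 1 ≤ L)
    (hdiam : DiamBound A L) (hbase : ∀ i, (1 : F n) ∈ treeVerts (A i))
    (k : ℕ) (hk : 3 ≤ k) (Sk0 : Set (F n)) (hSk0 : Sk0 ⊆ Sk A L k)
    (hSk0' : ∀ w ∈ Sk A L k, Xor' (w ∈ Sk0) (w⁻¹ ∈ Sk0))
    (M : F n → F n → ℕ)
    (hM1 : ∀ v w : F n,
      (∃ b : Letter n, wlen (v * letterE b) = wlen v + 1 ∧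
        (w = v * letterE b ∨ w⁻¹ = v * letterE b)) → M v w = 1)
    (hM0 : ∀ v w : F n,
      ¬ (∃ b : Letter n, wlen (v * letterE b) = wlen v + 1 ∧
        (w = v * letterE b ∨ w⁻¹ = v * letterE b)) → M v w = 0) :
    ∀ u ∈ Sk A L (k - 2), ∀ w ∈ Sk0,
      (∑ b : Letter n,
        if wlen (letterE b * u) = wlen u + 1 ∧ letterE b * u ∈ Sk A L (k - 1) then
          M (letterE b * u) w else 0) =
      ∑ b : Letter n,
        if wlen (letterE b * u⁻¹) = wlen u + 1 ∧ letterE b * u⁻¹ ∈ Sk A L (k - 1) then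
          M (letterE b * u⁻¹) w else 0 := by
  obtain ⟨k, rfl⟩ := Nat.exists_eq_add_of_le' hk
  obtain rfl := eq_extensionMatrix hM1 hM0
  exact fun u hu w hw => statement_14_general (fun _ => inv_mem_Ccal A) hu.1 (hSk0 hw)

end RelCurr
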